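/- Let V = V₀ + V₁ where V₀ ∈ L^∞(ℝ) with ess inf V₀ > 0 and V₁ is a signed Radon measure on ℝ with finite total variation. Then the functional u ↦ I(u;V) is weakly sequentially lower semi-continuous on H¹(ℝ): if u_n → u weakly in H¹(ℝ), then I(u;V) ≤ liminf_{n→∞} I(u_n;V). -/

import Mathlib

open MeasureTheory Filter Real Topology

/-- The supremum norm `‖u‖_∞` of a (bounded continuous) function `u : ℝ → ℝ`. -/
noncomputable def supNorm (u : ℝ → ℝ) : ℝ := ⨆ x : ℝ, |u x|

/-- `u` is (the continuous representative of) an element of `H¹(ℝ)`: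
`u` is continuous, `u ∈ L²(ℝ)`, and there is a weak derivative `u' ∈ L²(ℝ)`,
i.e. `u x = u 0 + ∫_0^x u'`. -/
def IsH1 (u : ℝ → ℝ) : Prop :=
  Continuous u ∧ MemLp u 2 (volume : Measure ℝ) ∧
    ∃ u' : ℝ → ℝ, MemLp u' 2 (volume : Measure ℝ) ∧
      ∀ x : ℝ, u x = u 0 + ∫ t in (0:ℝ)..x, u' t

/-- The Dirichlet energy `∫_ℝ |u'(x)|² dx`.  (For `u ∈ H¹(ℝ)` the classical
derivative `deriv u` exists a.e. and coincides a.e. with the weak derivative.) -/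
noncomputable def energy (u : ℝ → ℝ) : ℝ := ∫ x : ℝ, (deriv u x) ^ 2

/-- Integral of `f` against a finite signed Radon measure `μ`, via its Jordan
decomposition `μ = μ₊ - μ₋`. -/
noncomputable def sMeasInt (μ : SignedMeasure ℝ) (f : ℝ → ℝ) : ℝ :=
  (∫ x, f x ∂μ.toJordanDecomposition.posPart) -
    (∫ x, f x ∂μ.toJordanDecomposition.negPart)

/-- `I(u;V)` for a generalized potential `V = V₀ + V₁` with `V₀ ∈ L^∞(ℝ)` and
`V₁` a finite signed Radon measure:
`I(u;V) = ∫_ℝ (|u'|² + V₀|u|²) dx + ∫_ℝ |u|² dV₁`. -/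
noncomputable def Itot (V₀ : ℝ → ℝ) (V₁ : SignedMeasure ℝ) (u : ℝ → ℝ) : ℝ :=
  (∫ x : ℝ, ((deriv u x) ^ 2 + V₀ x * (u x) ^ 2)) + sMeasInt V₁ (fun x => (u x) ^ 2)

/-- The `H¹(ℝ)` inner product `(u,v)_{H¹} = ∫_ℝ (uv + u'v') dx`. -/
noncomputable def h1Inner (u v : ℝ → ℝ) : ℝ :=
  ∫ x : ℝ, (u x * v x + deriv u x * deriv v x)

/-- `u_n → u` weakly in `H¹(ℝ)`: each `u_n` and `u` lie in `H¹(ℝ)` and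
`(u_n, v)_{H¹} → (u, v)_{H¹}` for every `v ∈ H¹(ℝ)`. -/
def WeakH1Tendsto (un : ℕ → ℝ → ℝ) (u : ℝ → ℝ) : Prop :=
  (∀ n, IsH1 (un n)) ∧ IsH1 u ∧
    ∀ v : ℝ → ℝ, IsH1 v →
      Filter.Tendsto (fun n => h1Inner (un n) v) Filter.atTop (𝓝 (h1Inner u v))

/-!
The map `u ↦ (u, u')` embeds `H¹(ℝ)` isometrically onto a closed subspace of the Hilbert space
`L²(ℝ) × L²(ℝ)`, so weak convergence in `H¹(ℝ)` is weak convergence of the pairs there. Point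
evaluations are inner products with vectors of norm at most `√2`, whatever the point; hence
`u_n → u` weakly implies that `u_n → u` pointwise with a uniform bound, and `∫ |u_n|² dV₁`
converges by dominated convergence. What remains of `I(·;V)` is the quadratic form of a bounded
positive operator `A`, which is weakly lower semicontinuous because
`2⟪x, A a⟫ - ⟪A a, a⟫ ≤ ⟪A x, x⟫`.
-/

open Set
open scoped InnerProduct InnerProductSpace ENNReal

section WeakConvergence

variable {𝕜 E : Type*} [RCLike 𝕜] [NormedAddCommGroup E] [InnerProductSpace 𝕜 E]

theorem tendsto_inner_of_forall_mem {ι : Type*} {l : Filter ι} (K : Submodule 𝕜 E)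
    [K.HasOrthogonalProjection] {x : ι → E} {a : E} (hx : ∀ i, x i ∈ K) (ha : a ∈ K)
    (h : ∀ y ∈ K, Tendsto (fun i => ⟪x i, y⟫_𝕜) l (𝓝 ⟪a, y⟫_𝕜)) (y : E) :
    Tendsto (fun i => ⟪x i, y⟫_𝕜) l (𝓝 ⟪a, y⟫_𝕜) := by
  obtain ⟨y, hy, z, hz, rfl⟩ := K.exists_add_mem_mem_orthogonal y
  have inner_z : ∀ w ∈ K, ⟪w, z⟫_𝕜 = 0 := hz
  simpa only [inner_add_right, inner_z _ (hx _), inner_z _ ha, add_zero] using h y hy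

theorem two_mul_re_inner_sub_le_reApplyInnerSelf {A : E →L[𝕜] E} (hA : A.IsPositive) (x a : E) :
    2 * RCLike.re ⟪x, A a⟫_𝕜 - A.reApplyInnerSelf a ≤ A.reApplyInnerSelf x := by
  have hnonneg : 0 ≤ RCLike.re ⟪A (x - a), x - a⟫_𝕜 := hA.re_inner_nonneg_left _
  have hsymm : RCLike.re ⟪A a, x⟫_𝕜 = RCLike.re ⟪x, A a⟫_𝕜 := inner_re_symm _ _
  simp only [map_sub, inner_sub_left, inner_sub_right, hA.inner_left_eq_inner_right x a,
    hsymm] at hnonneg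
  simp only [ContinuousLinearMap.reApplyInnerSelf_apply]
  linarith

variable [CompleteSpace E]

theorem exists_norm_le_of_tendsto_inner {x : ℕ → E} {a : E}
    (h : ∀ y, Tendsto (fun n => ⟪x n, y⟫_𝕜) atTop (𝓝 ⟪a, y⟫_𝕜)) : ∃ C, ∀ n, ‖x n‖ ≤ C := by
  obtain ⟨C, hC⟩ := banach_steinhaus (g := fun n => innerSL 𝕜 (x n)) fun y => by
    obtain ⟨C, hC⟩ := (h y).norm.bddAbove_range
    exact ⟨C, fun n => hC ⟨n, rfl⟩⟩
  exact ⟨C, fun n => by simpa using hC n⟩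

theorem isBoundedUnder_le_reApplyInnerSelf_of_tendsto_inner {x : ℕ → E} {a : E}
    (h : ∀ y, Tendsto (fun n => ⟪x n, y⟫_𝕜) atTop (𝓝 ⟪a, y⟫_𝕜)) (A : E →L[𝕜] E) :
    IsBoundedUnder (· ≤ ·) atTop fun n => A.reApplyInnerSelf (x n) := by
  obtain ⟨C, hC⟩ := exists_norm_le_of_tendsto_inner h
  refine isBoundedUnder_of ⟨‖A‖ * C * C, fun n => ?_⟩
  have hC₀ : 0 ≤ C := (norm_nonneg _).trans (hC 0)
  calc A.reApplyInnerSelf (x n) ≤ ‖A (x n)‖ * ‖x n‖ := re_inner_le_norm _ _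
    _ ≤ ‖A‖ * C * C := by gcongr; exacts [A.le_opNorm_of_le (hC n), hC n]

theorem reApplyInnerSelf_le_liminf_of_tendsto_inner {A : E →L[𝕜] E} (hA : A.IsPositive)
    {x : ℕ → E} {a : E} (h : ∀ y, Tendsto (fun n => ⟪x n, y⟫_𝕜) atTop (𝓝 ⟪a, y⟫_𝕜)) :
    A.reApplyInnerSelf a ≤ liminf (fun n => A.reApplyInnerSelf (x n)) atTop := by
  have hlim : Tendsto (fun n => 2 * RCLike.re ⟪x n, A a⟫_𝕜 - A.reApplyInnerSelf a) atTop
      (𝓝 (A.reApplyInnerSelf a)) := by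
    have hre := (RCLike.continuous_re.tendsto _).comp (h (A a))
    have hlim := (hre.const_mul 2).sub_const (A.reApplyInnerSelf a)
    rwa [← hA.inner_left_eq_inner_right, ← A.reApplyInnerSelf_apply, two_mul,
      add_sub_cancel_right] at hlim
  rw [← hlim.liminf_eq]
  exact liminf_le_liminf (.of_forall fun n => two_mul_re_inner_sub_le_reApplyInnerSelf hA _ _)
    hlim.isBoundedUnder_ge
    (isBoundedUnder_le_reApplyInnerSelf_of_tendsto_inner h A).isCoboundedUnder_ge

end WeakConvergence

section LebesgueSpaces

variable {α : Type*} [MeasurableSpace α] {μ : Measure α}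

theorem inner_toLp_prod_toLp {f₁ f₂ g₁ g₂ : α → ℝ} (hf₁ : MemLp f₁ 2 μ) (hf₂ : MemLp f₂ 2 μ)
    (hg₁ : MemLp g₁ 2 μ) (hg₂ : MemLp g₂ 2 μ) :
    ⟪WithLp.toLp 2 (hf₁.toLp, hf₂.toLp), WithLp.toLp 2 (hg₁.toLp, hg₂.toLp)⟫_ℝ =
      ∫ x, (f₁ x * g₁ x + f₂ x * g₂ x) ∂μ := by
  rw [WithLp.prod_inner_apply, L2.inner_def, L2.inner_def,
    ← integral_add (L2.integrable_inner _ _) (L2.integrable_inner _ _)]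
  refine integral_congr_ae ?_
  filter_upwards [hf₁.coeFn_toLp, hf₂.coeFn_toLp, hg₁.coeFn_toLp, hg₂.coeFn_toLp]
    with x h₁ h₂ h₃ h₄
  simp [h₁, h₂, h₃, h₄, mul_comm]

theorem inner_holderL_mul (V : Lp ℝ ∞ μ) (f g : Lp ℝ 2 μ) :
    ⟪(ContinuousLinearMap.mul ℝ ℝ).holderL μ ∞ 2 2 V f, g⟫_ℝ = ∫ x, V x * f x * g x ∂μ := by
  rw [L2.inner_def]
  refine integral_congr_ae ?_
  filter_upwards [(ContinuousLinearMap.mul ℝ ℝ).coeFn_holder (r := 2) V f] with x hx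
  simp [ContinuousLinearMap.holderL, hx, mul_comm]

theorem isPositive_holderL_mul {V : Lp ℝ ∞ μ} (hV : 0 ≤ᵐ[μ] V) :
    ((ContinuousLinearMap.mul ℝ ℝ).holderL μ ∞ 2 2 V).IsPositive := by
  refine ⟨fun f g => ?_, fun f => ?_⟩
  · simp only [ContinuousLinearMap.coe_coe, inner_holderL_mul, real_inner_comm _ f,
      mul_right_comm]
  · rw [ContinuousLinearMap.reApplyInnerSelf_apply, inner_holderL_mul]
    refine integral_nonneg_of_ae ?_
    filter_upwards [hV] with x hx
    simpa [mul_assoc] using mul_nonneg hx (mul_self_nonneg (f x))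

theorem ae_nonneg_of_essInf_pos {f : α → ℝ} (hf : MemLp f ∞ μ) (hpos : 0 < essInf f μ) :
    0 ≤ᵐ[μ] f := by
  have hbdd : IsBoundedUnder (· ≥ ·) (ae μ) f := by
    refine isBoundedUnder_of_eventually_ge (a := -lpNorm f ∞ μ) ?_
    filter_upwards [ae_le_lpNorm_exponent_top hf] with x hx using (abs_le.1 hx).1
  filter_upwards [ae_essInf_le hbdd] with x hx using hpos.le.trans hx

end LebesgueSpaces

section Interval

theorem continuous_intervalIntegral_Lp_two {𝕜 : Type*} [RCLike 𝕜] {μ : Measure ℝ}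
    [IsLocallyFiniteMeasure μ] (a b : ℝ) :
    Continuous fun f : Lp 𝕜 2 μ => ∫ t in a..b, f t ∂μ := by
  simp_rw [intervalIntegral, ← L2.inner_indicatorConstLp_one measurableSet_Ioc
    measure_Ioc_lt_top.ne]
  fun_prop

theorem intervalIntegrable_of_memLp {F : Type*} [NormedAddCommGroup F] {μ : Measure ℝ}
    [IsLocallyFiniteMeasure μ] {p : ℝ≥0∞} (hp : 1 ≤ p) {f : ℝ → F} (hf : MemLp f p μ) (a b : ℝ) :
    IntervalIntegrable f μ a b :=
  ((hf.locallyIntegrable hp).integrableOn_isCompact isCompact_uIcc).intervalIntegrable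

theorem deriv_ae_eq_of_eq_add_integral {F : Type*} [NormedAddCommGroup F] [NormedSpace ℝ F]
    [CompleteSpace F] {u g : ℝ → F} {c : F} {a : ℝ} (hg : LocallyIntegrable g)
    (h : ∀ x, u x = c + ∫ t in a..x, g t) : deriv u =ᵐ[volume] g := by
  rw [funext h]
  filter_upwards [LocallyIntegrable.ae_hasDerivAt_integral hg] with x hx
  exact ((hx a).const_add c).deriv

theorem eq_integral_add_mul_deriv {u : ℝ → ℝ} {x : ℝ}
    (hu : AbsolutelyContinuousOnInterval u x (x + 1)) :
    u x = ∫ y in x..x + 1, (u y + deriv u y * (y - (x + 1))) := by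
  have hramp : AbsolutelyContinuousOnInterval (fun y : ℝ => y - (x + 1)) x (x + 1) :=
    (LipschitzWith.mk_one fun a b => by simp).lipschitzOnWith.absolutelyContinuousOnInterval
  have hparts := hu.integral_deriv_mul_eq_sub hramp
  simp only [deriv_sub_const_fun, deriv_id'', mul_one] at hparts
  simp_rw [add_comm (u _)]
  rw [hparts]
  ring

end Interval

theorem tendsto_sMeasInt_of_forall_abs_le (μ : SignedMeasure ℝ) {f : ℕ → ℝ → ℝ} {g : ℝ → ℝ}
    {C : ℝ} (hf : ∀ n, Measurable (f n)) (hC : ∀ n x, |f n x| ≤ C)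
    (h : ∀ x, Tendsto (fun n => f n x) atTop (𝓝 (g x))) :
    Tendsto (fun n => sMeasInt μ (f n)) atTop (𝓝 (sMeasInt μ g)) := by
  have hlim (ν : Measure ℝ) [IsFiniteMeasure ν] :
      Tendsto (fun n => ∫ x, f n x ∂ν) atTop (𝓝 (∫ x, g x ∂ν)) :=
    tendsto_integral_of_dominated_convergence (fun _ => C) (fun n => (hf n).aestronglyMeasurable)
      (integrable_const C) (fun n => .of_forall (hC n)) (.of_forall h)
  exact (hlim _).sub (hlim _)

theorem IsH1.of_eq_add_integral {u g : ℝ → ℝ} (hu : MemLp u 2) (hg : MemLp g 2)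
    (h : ∀ x, u x = u 0 + ∫ t in (0 : ℝ)..x, g t) : IsH1 u := by
  refine ⟨?_, hu, g, hg, h⟩
  rw [funext h]
  exact (intervalIntegral.continuous_primitive
    (intervalIntegrable_of_memLp one_le_two hg) 0).const_add (u 0)

namespace IsH1

variable {u v : ℝ → ℝ}

theorem memLp_deriv (hu : IsH1 u) : MemLp (deriv u) 2 := by
  obtain ⟨_, _, u', hu', h⟩ := hu
  exact hu'.ae_eq (deriv_ae_eq_of_eq_add_integral (hu'.locallyIntegrable one_le_two) h).symm

theorem intervalIntegrable_deriv (hu : IsH1 u) (a b : ℝ) :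
    IntervalIntegrable (deriv u) volume a b :=
  intervalIntegrable_of_memLp one_le_two hu.memLp_deriv a b

theorem eq_add_integral_deriv (hu : IsH1 u) (a x : ℝ) : u x = u a + ∫ t in a..x, deriv u t := by
  obtain ⟨_, _, u', hu', h⟩ := id hu
  have from_zero (y : ℝ) : u y = u 0 + ∫ t in (0 : ℝ)..y, deriv u t := by
    rw [h y, intervalIntegral.integral_congr_ae]
    filter_upwards [deriv_ae_eq_of_eq_add_integral (hu'.locallyIntegrable one_le_two) h]
      with t ht _ using ht.symm
  rw [← intervalIntegral.integral_interval_sub_left (hu.intervalIntegrable_deriv 0 x)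
    (hu.intervalIntegrable_deriv 0 a), from_zero x, from_zero a]
  ring

theorem absolutelyContinuousOnInterval (hu : IsH1 u) (a b : ℝ) :
    AbsolutelyContinuousOnInterval u a b := by
  rw [funext (hu.eq_add_integral_deriv a)]
  exact (LipschitzWith.const (u a)).lipschitzOnWith.absolutelyContinuousOnInterval.fun_add <|
    (hu.intervalIntegrable_deriv a b).absolutelyContinuousOnInterval_intervalIntegral left_mem_uIcc

theorem add_eq_add_integral (hu : IsH1 u) (hv : IsH1 v) (x : ℝ) :
    (u + v) x = (u + v) 0 + ∫ t in (0 : ℝ)..x, (deriv u + deriv v) t := by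
  simp only [Pi.add_apply]
  rw [intervalIntegral.integral_add (hu.intervalIntegrable_deriv 0 x)
    (hv.intervalIntegrable_deriv 0 x), hu.eq_add_integral_deriv 0 x, hv.eq_add_integral_deriv 0 x]
  ring

theorem smul_eq_add_integral (c : ℝ) (hu : IsH1 u) (x : ℝ) :
    (c • u) x = (c • u) 0 + ∫ t in (0 : ℝ)..x, (c • deriv u) t := by
  simp only [Pi.smul_apply]
  rw [intervalIntegral.integral_smul, hu.eq_add_integral_deriv 0 x, smul_add]

protected theorem add (hu : IsH1 u) (hv : IsH1 v) : IsH1 (u + v) :=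
  .of_eq_add_integral (hu.2.1.add hv.2.1) (hu.memLp_deriv.add hv.memLp_deriv)
    (hu.add_eq_add_integral hv)

protected theorem const_smul (c : ℝ) (hu : IsH1 u) : IsH1 (c • u) :=
  .of_eq_add_integral (hu.2.1.const_smul c) (hu.memLp_deriv.const_smul c)
    (hu.smul_eq_add_integral c)

theorem deriv_add_ae_eq (hu : IsH1 u) (hv : IsH1 v) :
    deriv (u + v) =ᵐ[volume] deriv u + deriv v :=
  deriv_ae_eq_of_eq_add_integral ((hu.memLp_deriv.add hv.memLp_deriv).locallyIntegrable one_le_two)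
    (hu.add_eq_add_integral hv)

protected theorem zero : IsH1 0 :=
  .of_eq_add_integral (g := 0) .zero .zero (by simp)

end IsH1

/-- The Hilbert space `L²(ℝ) × L²(ℝ)` of candidate pairs `(u, u')`; `WithLp 2` makes its norm
Hilbertian, where the plain product would carry the maximum norm. -/
abbrev L2Pair : Type :=
  WithLp 2 (Lp ℝ 2 (volume : Measure ℝ) × Lp ℝ 2 (volume : Measure ℝ))

/-- The Sobolev space `H¹(ℝ)`, as a space of continuous functions. -/
def sobolevH1 : Submodule ℝ (ℝ → ℝ) where
  carrier := {u | IsH1 u}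
  add_mem' hu hv := hu.add hv
  zero_mem' := .zero
  smul_mem' c _ hu := hu.const_smul c

/-- The isometric embedding `u ↦ (u, u')` of `H¹(ℝ)` into the Hilbert space `L²(ℝ) × L²(ℝ)`. -/
noncomputable def sobolevGraph : sobolevH1 →ₗ[ℝ] L2Pair where
  toFun u := WithLp.toLp 2 (u.2.2.1.toLp, u.2.memLp_deriv.toLp)
  map_add' u v := by
    rw [← WithLp.toLp_add, Prod.mk_add_mk, ← MemLp.toLp_add, ← MemLp.toLp_add]
    congr 2
    exact MemLp.toLp_congr _ _ (u.2.deriv_add_ae_eq v.2)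
  map_smul' c u := by
    rw [RingHom.id_apply, ← WithLp.toLp_smul, Prod.smul_mk, ← MemLp.toLp_const_smul,
      ← MemLp.toLp_const_smul]
    congr 2
    exact MemLp.toLp_congr _ _ (.of_forall fun x => deriv_const_smul_field c (u : ℝ → ℝ))

theorem inner_sobolevGraph_toLp (u : sobolevH1) {f g : ℝ → ℝ} (hf : MemLp f 2) (hg : MemLp g 2) :
    ⟪sobolevGraph u, WithLp.toLp 2 (hf.toLp, hg.toLp)⟫_ℝ =
      ∫ x, ((u : ℝ → ℝ) x * f x + deriv u x * g x) :=
  inner_toLp_prod_toLp _ _ _ _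

theorem inner_sobolevGraph (u v : sobolevH1) :
    ⟪sobolevGraph u, sobolevGraph v⟫_ℝ = h1Inner u v :=
  inner_sobolevGraph_toLp u _ _

section PointEvaluation

/-- The ramp `y ↦ y - (x + 1)` on `(x, x + 1]`, extended by zero: the weight of `u'` in the
formula `u x = ∫ y in x..x + 1, (u y + u' y * (y - (x + 1)))`. -/
noncomputable def unitRamp (x : ℝ) : ℝ → ℝ :=
  (Ioc x (x + 1)).indicator fun y => y - (x + 1)

theorem abs_unitRamp_le (x y : ℝ) :
    |unitRamp x y| ≤ |(Ioc x (x + 1)).indicator (fun _ => 1) y| := by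
  by_cases hy : y ∈ Ioc x (x + 1)
  · rw [unitRamp, indicator_of_mem hy, indicator_of_mem hy, abs_one, abs_le]
    constructor <;> linarith [hy.1, hy.2]
  · simp [unitRamp, indicator_of_notMem hy]

theorem memLp_indicator_Ioc_one (x : ℝ) :
    MemLp ((Ioc x (x + 1)).indicator fun _ => (1 : ℝ)) 2 :=
  memLp_indicator_const 2 measurableSet_Ioc 1 (.inr measure_Ioc_lt_top.ne)

theorem memLp_unitRamp (x : ℝ) : MemLp (unitRamp x) 2 :=
  (memLp_indicator_Ioc_one x).mono
    ((by fun_prop : Measurable fun y => y - (x + 1)).indicator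
      measurableSet_Ioc).aestronglyMeasurable (.of_forall (abs_unitRamp_le x))

/-- A vector of `L²(ℝ) × L²(ℝ)` representing the evaluation `u ↦ u x` on the graph of the
derivative. It is not itself in the graph, so it is not the Riesz representer in `H¹(ℝ)`. -/
noncomputable def evalRepresenter (x : ℝ) : L2Pair :=
  WithLp.toLp 2 ((memLp_indicator_Ioc_one x).toLp, (memLp_unitRamp x).toLp)

theorem inner_sobolevGraph_evalRepresenter (u : sobolevH1) (x : ℝ) :
    ⟪sobolevGraph u, evalRepresenter x⟫_ℝ = (u : ℝ → ℝ) x := by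
  rw [evalRepresenter, inner_sobolevGraph_toLp,
    eq_integral_add_mul_deriv (u.2.absolutelyContinuousOnInterval x (x + 1)),
    intervalIntegral.integral_of_le (by linarith), ← integral_indicator measurableSet_Ioc]
  congr 1 with y
  by_cases hy : y ∈ Ioc x (x + 1) <;> simp [unitRamp, hy]

theorem norm_evalRepresenter_sq_le (x : ℝ) : ‖evalRepresenter x‖ ^ 2 ≤ 2 := by
  have norm_one : ‖(memLp_indicator_Ioc_one x).toLp‖ = 1 := by
    have h := norm_indicatorConstLp (hs := measurableSet_Ioc)
      (hμs := (measure_Ioc_lt_top (μ := volume) (a := x) (b := x + 1)).ne) (c := (1 : ℝ))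
      two_ne_zero ENNReal.ofNat_ne_top
    simpa [indicatorConstLp] using h
  have norm_ramp : ‖(memLp_unitRamp x).toLp‖ ≤ 1 := by
    rw [← norm_one]
    refine Lp.norm_le_norm_of_ae_le ?_
    filter_upwards [(memLp_unitRamp x).coeFn_toLp, (memLp_indicator_Ioc_one x).coeFn_toLp]
      with y hramp hone
    simpa only [hramp, hone, Real.norm_eq_abs] using abs_unitRamp_le x y
  rw [evalRepresenter, WithLp.prod_norm_sq_eq_of_L2]
  change ‖(memLp_indicator_Ioc_one x).toLp‖ ^ 2 + ‖(memLp_unitRamp x).toLp‖ ^ 2 ≤ 2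
  rw [norm_one]
  linarith [pow_le_one₀ (n := 2) (norm_nonneg _) norm_ramp]

theorem sq_apply_le_two_mul_norm_sobolevGraph_sq (u : sobolevH1) (x : ℝ) :
    (u : ℝ → ℝ) x ^ 2 ≤ 2 * ‖sobolevGraph u‖ ^ 2 := by
  rw [← inner_sobolevGraph_evalRepresenter, ← sq_abs]
  calc |⟪sobolevGraph u, evalRepresenter x⟫_ℝ| ^ 2
      ≤ (‖sobolevGraph u‖ * ‖evalRepresenter x‖) ^ 2 := by
        gcongr; exact abs_real_inner_le_norm _ _
    _ = ‖evalRepresenter x‖ ^ 2 * ‖sobolevGraph u‖ ^ 2 := by ring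
    _ ≤ 2 * ‖sobolevGraph u‖ ^ 2 := by gcongr; exact norm_evalRepresenter_sq_le x

end PointEvaluation

section Closedness

theorem apply_eq_add_integral_sobolevGraph_snd (u : sobolevH1) (x : ℝ) :
    (u : ℝ → ℝ) x = (u : ℝ → ℝ) 0 + ∫ t in (0 : ℝ)..x, (sobolevGraph u).snd t := by
  rw [u.2.eq_add_integral_deriv 0 x, intervalIntegral.integral_congr_ae]
  filter_upwards [u.2.memLp_deriv.coeFn_toLp] with t ht _ using ht.symm

theorem mem_range_sobolevGraph {u : ℝ → ℝ} {p : L2Pair}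
    (hfst : u =ᵐ[volume] p.fst) (hsnd : ∀ x, u x = u 0 + ∫ t in (0 : ℝ)..x, p.snd t) :
    p ∈ LinearMap.range sobolevGraph := by
  have hu : IsH1 u :=
    .of_eq_add_integral ((Lp.memLp p.fst).ae_eq hfst.symm) (Lp.memLp p.snd) hsnd
  refine ⟨⟨u, hu⟩, (WithLp.equiv 2 _).injective (Prod.ext (Lp.ext ?_) (Lp.ext ?_))⟩
  · exact hu.2.1.coeFn_toLp.trans hfst
  · exact hu.memLp_deriv.coeFn_toLp.trans
      (deriv_ae_eq_of_eq_add_integral ((Lp.memLp p.snd).locallyIntegrable one_le_two) hsnd)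

theorem isClosed_range_sobolevGraph :
    IsClosed (LinearMap.range sobolevGraph : Set L2Pair) := by
  refine IsSeqClosed.isClosed fun p q hp hq => ?_
  choose u hu using hp
  obtain rfl : (fun n => sobolevGraph (u n)) = p := funext hu
  have tendsto_apply (x : ℝ) :
      Tendsto (fun n => (u n : ℝ → ℝ) x) atTop (𝓝 ⟪q, evalRepresenter x⟫_ℝ) := by
    simp only [← inner_sobolevGraph_evalRepresenter]
    exact hq.inner tendsto_const_nhds
  have tendsto_fst : Tendsto (fun n => (sobolevGraph (u n)).fst) atTop (𝓝 q.fst) :=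
    ((WithLp.fstL 2 ℝ _ _).continuous.tendsto q).comp hq
  have tendsto_snd : Tendsto (fun n => (sobolevGraph (u n)).snd) atTop (𝓝 q.snd) :=
    ((WithLp.sndL 2 ℝ _ _).continuous.tendsto q).comp hq
  refine mem_range_sobolevGraph (u := fun x => ⟪q, evalRepresenter x⟫_ℝ) ?_ fun x => ?_
  · obtain ⟨φ, hφ, hae⟩ := (tendstoInMeasure_of_tendsto_Lp tendsto_fst).exists_seq_tendsto_ae
    filter_upwards [hae, ae_all_iff.2 fun n => (u n).2.2.1.coeFn_toLp] with x hx hun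
    refine tendsto_nhds_unique ((tendsto_apply x).comp hφ.tendsto_atTop) (hx.congr fun n => ?_)
    exact hun (φ n)
  · refine tendsto_nhds_unique (tendsto_apply x) ?_
    simp only [apply_eq_add_integral_sobolevGraph_snd _ x]
    exact (tendsto_apply 0).add
      (((continuous_intervalIntegral_Lp_two 0 x).tendsto q.snd).comp tendsto_snd)

end Closedness

section WeakH1Convergence

variable {u : ℕ → sobolevH1} {a : sobolevH1}

theorem WeakH1Tendsto.tendsto_inner_sobolevGraph
    (h : WeakH1Tendsto (fun n => u n) a) (p : L2Pair) :
    Tendsto (fun n => ⟪sobolevGraph (u n), p⟫_ℝ) atTop (𝓝 ⟪sobolevGraph a, p⟫_ℝ) := by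
  have : CompleteSpace (LinearMap.range sobolevGraph) :=
    isClosed_range_sobolevGraph.completeSpace_coe
  refine tendsto_inner_of_forall_mem (LinearMap.range sobolevGraph) (fun n => ⟨u n, rfl⟩)
    ⟨a, rfl⟩ ?_ p
  rintro _ ⟨v, rfl⟩
  simpa only [inner_sobolevGraph] using h.2.2 v v.2

theorem WeakH1Tendsto.tendsto_sMeasInt_sq (h : WeakH1Tendsto (fun n => u n) a)
    (μ : SignedMeasure ℝ) :
    Tendsto (fun n => sMeasInt μ fun x => (u n : ℝ → ℝ) x ^ 2) atTop
      (𝓝 (sMeasInt μ fun x => (a : ℝ → ℝ) x ^ 2)) := by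
  obtain ⟨C, hC⟩ := exists_norm_le_of_tendsto_inner h.tendsto_inner_sobolevGraph
  refine tendsto_sMeasInt_of_forall_abs_le μ (C := 2 * C ^ 2)
    (fun n => ((u n).2.1.pow 2).measurable) (fun n x => ?_) fun x => ?_
  · rw [abs_sq]
    exact (sq_apply_le_two_mul_norm_sobolevGraph_sq (u n) x).trans (by gcongr; exact hC n)
  · simp only [← inner_sobolevGraph_evalRepresenter]
    exact (h.tendsto_inner_sobolevGraph (evalRepresenter x)).pow 2

end WeakH1Convergence

section EnergyForm

open ContinuousLinearMap

/-- The operator `(f, g) ↦ (V f, g)` on `L²(ℝ) × L²(ℝ)`, whose quadratic form restricts to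
`u ↦ ∫ (|u'|² + V |u|²)` on `H¹(ℝ)`. -/
noncomputable def energyOperator (V : Lp ℝ ∞ (volume : Measure ℝ)) :
    L2Pair →L[ℝ] L2Pair :=
  (WithLp.fstL 2 ℝ _ _)† ∘L (mul ℝ ℝ).holderL volume ∞ 2 2 V ∘L WithLp.fstL 2 ℝ _ _ +
    (WithLp.sndL 2 ℝ _ _)† ∘L WithLp.sndL 2 ℝ _ _

theorem isPositive_energyOperator {V : Lp ℝ ∞ (volume : Measure ℝ)} (hV : 0 ≤ᵐ[volume] V) :
    (energyOperator V).IsPositive :=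
  ((isPositive_holderL_mul hV).adjoint_conj _).add (isPositive_adjoint_comp_self _)

theorem reApplyInnerSelf_energyOperator {V₀ : ℝ → ℝ} (hV₀ : MemLp V₀ ∞) (u : sobolevH1) :
    (energyOperator hV₀.toLp).reApplyInnerSelf (sobolevGraph u) =
      ∫ x, (deriv u x ^ 2 + V₀ x * (u : ℝ → ℝ) x ^ 2) := by
  have hVu : MemLp (fun x => V₀ x * (u : ℝ → ℝ) x) 2 := u.2.2.1.mul hV₀
  have hmul : (mul ℝ ℝ).holderL volume ∞ 2 2 hV₀.toLp (sobolevGraph u).fst = hVu.toLp := by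
    refine Lp.ext ((coeFn_holder _ _ _).trans ?_)
    filter_upwards [hV₀.coeFn_toLp, u.2.2.1.coeFn_toLp, hVu.coeFn_toLp] with x hV hu hVu
    simp [sobolevGraph, hV, hu, hVu]
  calc (energyOperator hV₀.toLp).reApplyInnerSelf (sobolevGraph u)
      = ⟪sobolevGraph u, WithLp.toLp 2 (hVu.toLp, u.2.memLp_deriv.toLp)⟫_ℝ := by
        rw [reApplyInnerSelf_apply, energyOperator, add_apply, inner_add_left, comp_apply,
          comp_apply, comp_apply, adjoint_inner_left, adjoint_inner_left, WithLp.fstL_apply,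
          hmul, WithLp.prod_inner_apply, real_inner_comm]
        rfl
    _ = ∫ x, ((u : ℝ → ℝ) x * (V₀ x * (u : ℝ → ℝ) x) + deriv u x * deriv u x) :=
        inner_sobolevGraph_toLp u _ _
    _ = ∫ x, (deriv u x ^ 2 + V₀ x * (u : ℝ → ℝ) x ^ 2) := by congr 1 with x; ring

theorem Itot_eq_reApplyInnerSelf_add {V₀ : ℝ → ℝ} (hV₀ : MemLp V₀ ∞) (V₁ : SignedMeasure ℝ)
    (u : sobolevH1) :
    Itot V₀ V₁ u = (energyOperator hV₀.toLp).reApplyInnerSelf (sobolevGraph u) +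
      sMeasInt V₁ fun x => (u : ℝ → ℝ) x ^ 2 := by
  rw [Itot, reApplyInnerSelf_energyOperator]

end EnergyForm

theorem Itot_weakly_lsc_general (V₀ : ℝ → ℝ) (hV₀ : MemLp V₀ ∞) (hnonneg : 0 ≤ᵐ[volume] V₀)
    (V₁ : SignedMeasure ℝ) (un : ℕ → ℝ → ℝ) (u : ℝ → ℝ) (hw : WeakH1Tendsto un u) :
    Itot V₀ V₁ u ≤ liminf (fun n => Itot V₀ V₁ (un n)) atTop := by
  lift un to ℕ → sobolevH1 using hw.1
  lift u to sobolevH1 using hw.2.1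
  have hpos := isPositive_energyOperator (hnonneg.trans_eq hV₀.coeFn_toLp.symm)
  have hweak := hw.tendsto_inner_sobolevGraph
  have hS := hw.tendsto_sMeasInt_sq V₁
  simp only [Itot_eq_reApplyInnerSelf_add hV₀]
  rw [← hS.liminf_eq]
  refine (add_le_add_left (reApplyInnerSelf_le_liminf_of_tendsto_inner hpos hweak) _).trans ?_
  exact le_liminf_add (isBoundedUnder_of ⟨0, fun n => hpos.2 _⟩)
    (isBoundedUnder_le_reApplyInnerSelf_of_tendsto_inner hweak _)
    hS.isBoundedUnder_ge hS.isCoboundedUnder_ge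

/-- **Weak lower semicontinuity of `I(·;V)`.** For `V = V₀ + V₁` with `V₀ ∈ L^∞(ℝ)`,
`ess inf V₀ > 0`, and `V₁` a finite signed Radon measure: if `u_n → u` weakly in `H¹(ℝ)`,
then `I(u;V) ≤ liminf_{n→∞} I(u_n;V)`. -/
theorem Itot_weakly_lsc (V₀ : ℝ → ℝ) (hV₀ : MemLp V₀ ⊤ (volume : Measure ℝ))
    (hpos : 0 < essInf V₀ (volume : Measure ℝ)) (V₁ : SignedMeasure ℝ)
    (un : ℕ → ℝ → ℝ) (u : ℝ → ℝ) (hw : WeakH1Tendsto un u) :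
    Itot V₀ V₁ u ≤ Filter.liminf (fun n => Itot V₀ V₁ (un n)) Filter.atTop := by
  exact Itot_weakly_lsc_general V₀ hV₀ (ae_nonneg_of_essInf_pos hV₀ hpos) V₁ un u hw
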